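/- Let V be a finite nonempty subset of ℝ^N, let E ∈ ℝ^{N×N} be a symmetric positive definite matrix and e ∈ ℝ^N. Then conv(V) ∩ 𝓔(E, e) = ∅ if and only if there exist λ ∈ ℝ^N and μ ∈ ℝ such that λᵀ v > μ for every v ∈ V and sqrt(λᵀ E⁻¹ λ) + λᵀ e < μ (these conditions force λ ≠ 0). -/

import Mathlib

open Matrix

lemma aux_symm {N : ℕ} {E : Matrix (Fin N) (Fin N) ℝ} (hE : E.PosDef) (x y : Fin N → ℝ) :
    x ⬝ᵥ E *ᵥ y = y ⬝ᵥ E *ᵥ x := by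
  have hT : Eᵀ = E := by
    have := hE.1
    rwa [Matrix.IsHermitian, conjTranspose_eq_transpose_of_trivial] at this
  rw [dotProduct_mulVec, ← mulVec_transpose, hT, dotProduct_comm]

lemma aux_nonneg {N : ℕ} {E : Matrix (Fin N) (Fin N) ℝ} (hE : E.PosDef) (x : Fin N → ℝ) :
    0 ≤ x ⬝ᵥ E *ᵥ x := by
  have := hE.posSemidef.dotProduct_mulVec_nonneg x
  simpa using this

lemma aux_expand {N : ℕ} {E : Matrix (Fin N) (Fin N) ℝ} (hE : E.PosDef) (x y : Fin N → ℝ)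
    (a b : ℝ) :
    (a • x + b • y) ⬝ᵥ E *ᵥ (a • x + b • y) =
      a * a * (x ⬝ᵥ E *ᵥ x) + 2 * a * b * (x ⬝ᵥ E *ᵥ y) + b * b * (y ⬝ᵥ E *ᵥ y) := by
  simp only [mulVec_add, mulVec_smul, add_dotProduct, dotProduct_add, smul_dotProduct,
    dotProduct_smul, smul_eq_mul]
  rw [aux_symm hE y x]
  ring

lemma aux_cs {N : ℕ} {E : Matrix (Fin N) (Fin N) ℝ} (hE : E.PosDef) (x y : Fin N → ℝ) :
    (x ⬝ᵥ E *ᵥ y) ^ 2 ≤ (x ⬝ᵥ E *ᵥ x) * (y ⬝ᵥ E *ᵥ y) := by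
  have h : ∀ t : ℝ, 0 ≤ (x ⬝ᵥ E *ᵥ x) * (t * t) + (2 * (x ⬝ᵥ E *ᵥ y)) * t + y ⬝ᵥ E *ᵥ y := by
    intro t
    have h1 := aux_nonneg hE (t • x + (1 : ℝ) • y)
    rw [aux_expand hE] at h1
    linarith
  have := discrim_le_zero h
  unfold discrim at this
  nlinarith

lemma aux_inv {N : ℕ} {E : Matrix (Fin N) (Fin N) ℝ} (hE : E.PosDef) (l : Fin N → ℝ) :
    E *ᵥ (E⁻¹ *ᵥ l) = l := by
  rw [mulVec_mulVec, mul_nonsing_inv _ ((isUnit_iff_isUnit_det _).1 hE.isUnit), one_mulVec]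

lemma aux_convex {N : ℕ} {E : Matrix (Fin N) (Fin N) ℝ} (hE : E.PosDef) (e : Fin N → ℝ) :
    Convex ℝ {s : Fin N → ℝ | (s - e) ⬝ᵥ E *ᵥ (s - e) ≤ 1} := by
  intro x hx y hy a b ha hb hab
  simp only [Set.mem_setOf_eq] at *
  have h0 : a • x + b • y - e = a • (x - e) + b • (y - e) := by
    have : e = (a + b) • e := by rw [hab, one_smul]
    nth_rewrite 1 [this]
    module
  rw [h0, aux_expand hE]
  have h1 := aux_nonneg hE ((1 : ℝ) • (x - e) + (-1 : ℝ) • (y - e))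
  rw [aux_expand hE] at h1
  have h2 : (x - e) ⬝ᵥ E *ᵥ (y - e) ≤ 1 := by linarith
  have e1 := mul_le_mul_of_nonneg_left hx (mul_nonneg ha ha)
  have e2 := mul_le_mul_of_nonneg_left hy (mul_nonneg hb hb)
  have e3 := mul_le_mul_of_nonneg_left h2 (mul_nonneg ha hb)
  have e4 : (a + b) * (a + b) = 1 := by rw [hab]; norm_num
  linarith

/-- A polytope `conv(V)` with finite nonempty vertex set `V` and an ellipsoid `𝓔(E, e)`
are disjoint iff there exist `λ ∈ ℝ^N` and `μ ∈ ℝ` with `λᵀ v > μ` for every `v ∈ V`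
and `sqrt (λᵀ E⁻¹ λ) + λᵀ e < μ`. -/
theorem stmt_6 (N : ℕ) (V : Set (Fin N → ℝ)) (hV : V.Finite) (hVne : V.Nonempty)
    (E : Matrix (Fin N) (Fin N) ℝ) (hE : E.PosDef) (e : Fin N → ℝ) :
    convexHull ℝ V ∩ {s : Fin N → ℝ | (s - e) ⬝ᵥ E *ᵥ (s - e) ≤ 1} = ∅ ↔
      ∃ (lam : Fin N → ℝ) (μ : ℝ),
        (∀ v ∈ V, μ < lam ⬝ᵥ v) ∧
        Real.sqrt (lam ⬝ᵥ E⁻¹ *ᵥ lam) + lam ⬝ᵥ e < μ := by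
  constructor
  · intro h
    have hclosed : IsClosed {s : Fin N → ℝ | (s - e) ⬝ᵥ E *ᵥ (s - e) ≤ 1} := by
      apply isClosed_le _ continuous_const
      fun_prop
    have hdisj : Disjoint {s : Fin N → ℝ | (s - e) ⬝ᵥ E *ᵥ (s - e) ≤ 1} (convexHull ℝ V) :=
      (Set.disjoint_iff_inter_eq_empty.2 h).symm
    obtain ⟨f, u, v, hu, huv, hv⟩ := geometric_hahn_banach_closed_compact
      (aux_convex hE e) hclosed (convex_convexHull ℝ V) (hV.isCompact_convexHull ℝ) hdisj
    obtain ⟨lam, hlam⟩ : ∃ lam : Fin N → ℝ, ∀ x, f x = lam ⬝ᵥ x := by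
      refine ⟨fun i => f (Pi.single i 1), fun x => ?_⟩
      have := LinearMap.pi_apply_eq_sum_univ f.toLinearMap x
      simp only [ContinuousLinearMap.coe_coe] at this
      rw [this, dotProduct]
      refine Finset.sum_congr rfl fun i _ => ?_
      rw [smul_eq_mul, mul_comm]
      congr 2
      ext j
      simp [Pi.single_apply, eq_comm]
    refine ⟨lam, u, fun x hx => ?_, ?_⟩
    · rw [← hlam]
      exact huv.trans (hv x (subset_convexHull ℝ V hx))
    · set w := E⁻¹ *ᵥ lam with hw
      have hEw : E *ᵥ w = lam := aux_inv hE lam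
      have hq : w ⬝ᵥ E *ᵥ w = lam ⬝ᵥ w := by rw [hEw, dotProduct_comm]
      have hq0 : 0 ≤ lam ⬝ᵥ w := hq ▸ aux_nonneg hE w
      have hr2 := Real.mul_self_sqrt hq0
      set r := Real.sqrt (lam ⬝ᵥ w) with hr
      have hs := hu (r⁻¹ • w + e) (by
        simp only [Set.mem_setOf_eq, add_sub_cancel_right, mulVec_smul, smul_dotProduct,
          dotProduct_smul, smul_eq_mul]
        rw [hq, ← hr2]
        by_cases h0 : r = 0
        · simp [h0]
        · field_simp
          exact le_refl _)
      rw [hlam, dotProduct_add, dotProduct_smul, smul_eq_mul, ← hr2] at hs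
      by_cases h0 : r = 0
      · simpa [h0] using hs
      · rwa [inv_mul_cancel_left₀ h0] at hs
  · rintro ⟨lam, μ, h1, h2⟩
    rw [Set.eq_empty_iff_forall_notMem]
    rintro s ⟨hs, hs'⟩
    simp only [Set.mem_setOf_eq] at hs'
    have hconv : Convex ℝ {x : Fin N → ℝ | μ < lam ⬝ᵥ x} :=
      convex_halfSpace_gt ⟨fun x y => dotProduct_add _ _ _, fun c x => dotProduct_smul _ _ _⟩ μ
    have h3 : μ < lam ⬝ᵥ s := convexHull_min (fun v hv => h1 v hv) hconv hs
    set w := E⁻¹ *ᵥ lam with hw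
    have hEw : E *ᵥ w = lam := aux_inv hE lam
    have hcs := aux_cs hE (s - e) w
    have hq0 := aux_nonneg hE w
    rw [hEw, dotProduct_comm _ lam, dotProduct_comm _ lam] at hcs
    rw [hEw, dotProduct_comm _ lam] at hq0
    have h4 : lam ⬝ᵥ (s - e) ≤ Real.sqrt (lam ⬝ᵥ w) := by
      apply Real.le_sqrt_of_sq_le
      nlinarith
    rw [dotProduct_sub] at h4
    linarith
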